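/- Let 1 ≤ m ≤ d and let f : [0,1]^d → ℝ^m be a non-constant C¹ function. Then for every ε > 0, N_f(ε) ≤ d·2^{2m+d−1}·d! · (1/β_f^{−1}(ε)), where β_f^{−1} is the inverse of the strictly increasing map δ ↦ β_f(δ) = ω_{Df}(√d·δ)·(1 + √d·δ + 4·d^{d+1/2}·(d+1)⁴). -/

import Mathlib

open MeasureTheory Set Topology
open scoped ENNReal

noncomputable section

abbrev E (n : ℕ) : Type := EuclideanSpace ℝ (Fin n)

def unitCube (d : ℕ) : Set (E d) := {x | ∀ i, x i ∈ Set.Icc (0:ℝ) 1}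

def openCube (d : ℕ) : Set (E d) := {x | ∀ i, x i ∈ Set.Ioo (0:ℝ) 1}

/-- Jacobian matrix of `f` at `x`. -/
def jac {d m : ℕ} (f : E d → E m) (x : E d) : Matrix (Fin m) (Fin d) ℝ :=
  Matrix.of fun i j => fderiv ℝ f x (EuclideanSpace.single j 1) i

/-- Critical set of `g` in the open unit cube. -/
def critSet {d m : ℕ} (g : E d → E m) : Set (E d) :=
  {x ∈ openCube d | (jac g x).rank ≤ m - 1}

/-- `N_f(ε)`. -/
def Nf {d m : ℕ} (f : E d → E m) (ε : ℝ) : ℝ≥0∞ :=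
  sInf { h : ℝ≥0∞ | ∃ g : E d → E m, ContDiff ℝ 1 g ∧
    (∀ x ∈ unitCube d, ‖g x - f x‖ ≤ ε ∧ ‖fderiv ℝ g x - fderiv ℝ f x‖ ≤ ε) ∧
    h = μH[(d:ℝ) - 1] (critSet g) }

/-- minimal modulus of continuity of `Df` on `U`. -/
def omegaC1 {d m : ℕ} (f : E d → E m) (U : Set (E d)) (δ : ℝ) : ℝ :=
  sSup {r : ℝ | ∃ x ∈ U, ∃ y ∈ U, ‖x - y‖ ≤ δ ∧ r = ‖fderiv ℝ f x - fderiv ℝ f y‖}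

def betaf {d m : ℕ} (f : E d → E m) (δ : ℝ) : ℝ :=
  omegaC1 f (unitCube d) (Real.sqrt d * δ) *
    (1 + Real.sqrt d * δ + 4 * (d:ℝ) ^ ((d:ℝ) + 1/2) * ((d:ℝ)+1)^4)

end

/-!
A quantitative Sard argument. Averaging `f` over cubes of side `δ` gives a `C¹`-close map `F` whose
derivative is Lipschitz at small scales, with constant of order `ω / δ`, where `ω` is the
oscillation of `Df` at scale `δ`. Perturb `F` by a random linear map with entries uniform in
`[0, r]`. On a grid of mesh `1 / N`, a cell can meet the critical set only if the perturbed
Jacobian at its corner is within `O(ω / (δ N))` of a singular matrix. Conditioning on all rows but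
the dominant one in the dependence, this confines that row to a slab, an event of probability
`O(ω / (δ N r))`. Hence the `N^d` cells, each contributing `N^{-(d-1)}` to the covering sum, cost
`O(ω / (δ r))` on average, uniformly in `N`. By Fatou's lemma some perturbation has a critical set
of that `(d-1)`-dimensional measure; `r` proportional to `ω` is what the budget `ε` allows.
-/

open scoped Matrix

section RandomMatrix

variable {m n : Type*} [Fintype m] [Fintype n]

theorem measure_pi_le_of_forall_update {ι : Type*} [Fintype ι] [DecidableEq ι] {Y : ι → Type*}
    [∀ i, MeasurableSpace (Y i)] {μ : ∀ i, Measure (Y i)} [∀ i, IsProbabilityMeasure (μ i)]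
    {S : Set (∀ i, Y i)} (hS : MeasurableSet S) (i : ι) {p : ℝ≥0∞}
    (h : ∀ x, μ i {t | Function.update x i t ∈ S} ≤ p) : Measure.pi μ S ≤ p := by
  rw [← lintegral_indicator_one hS]
  suffices hmarginal : (∫⋯∫⁻_{i}, S.indicator 1 ∂μ) ≤ ∫⋯∫⁻_{i}, fun _ => p ∂μ from
    (lintegral_le_of_lmarginal_le {i} (measurable_one.indicator hS) measurable_const
      hmarginal).trans (by simp)
  intro x
  calc (∫⋯∫⁻_{i}, S.indicator 1 ∂μ) x
      = ∫⁻ t, {t | Function.update x i t ∈ S}.indicator 1 t ∂μ i :=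
        congrFun (lmarginal_singleton (S.indicator 1) i) x
    _ = μ i {t | Function.update x i t ∈ S} := lintegral_indicator_one (measurable_update x hS)
    _ ≤ p := h x
    _ = (∫⋯∫⁻_{i}, fun _ => p ∂μ) x := by simp [lmarginal_singleton]

theorem volume_unitInterval_abs_add_mul_le (a : ℝ) {r : ℝ} (hr : 0 < r) (τ : ℝ) :
    volume {t : unitInterval | |a + r * t| ≤ τ} ≤ ENNReal.ofReal (2 * τ / r) := by
  have himage : Subtype.val '' {t : unitInterval | |a + r * t| ≤ τ} ⊆
      Metric.closedBall (-a / r) (τ / r) := by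
    rintro _ ⟨t, ht, rfl⟩
    have hscale : |(t : ℝ) - -a / r| * r = |a + r * t| := by
      rw [← abs_of_pos hr, ← abs_mul, abs_of_pos hr]
      congr 1
      field_simp
      ring
    rw [Metric.mem_closedBall, Real.dist_eq, le_div_iff₀ hr, hscale]
    exact ht
  calc volume {t : unitInterval | |a + r * t| ≤ τ}
      = volume (Subtype.val '' {t : unitInterval | |a + r * t| ≤ τ}) :=
        (volume_image_subtype_coe measurableSet_Icc _).symm
    _ ≤ volume (Metric.closedBall (-a / r) (τ / r)) := measure_mono himage
    _ = ENNReal.ofReal (2 * τ / r) := by rw [Real.volume_closedBall, mul_div_assoc]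

theorem volume_abs_dotProduct_add_mul_le (b : n → ℝ) {r : ℝ} (hr : 0 < r) {v : n → ℝ} {j : n}
    (hv : v j = 1) (τ : ℝ) :
    volume {a : n → unitInterval | |(fun l => b l + r * (a l : ℝ)) ⬝ᵥ v| ≤ τ} ≤
      ENNReal.ofReal (2 * τ / r) := by
  classical
  have hmeas : MeasurableSet {a : n → unitInterval | |(fun l => b l + r * (a l : ℝ)) ⬝ᵥ v| ≤ τ} :=
    (isClosed_le (by unfold dotProduct; fun_prop) continuous_const).measurableSet
  refine measure_pi_le_of_forall_update hmeas j fun a => ?_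
  obtain ⟨c, hc⟩ : ∃ c, ∀ t : unitInterval,
      (fun l => b l + r * (Function.update a j t l : ℝ)) ⬝ᵥ v = c + r * t := by
    refine ⟨(∑ l ∈ Finset.univ.erase j, (b l + r * a l) * v l) + b j, fun t => ?_⟩
    rw [dotProduct, ← Finset.sum_erase_add _ _ (Finset.mem_univ j), Function.update_self, hv,
      mul_one, add_assoc]
    congr 1
    exact Finset.sum_congr rfl fun l hl => by rw [Function.update_of_ne (Finset.ne_of_mem_erase hl)]
  simp only [mem_ofPred_eq, hc]
  exact volume_unitInterval_abs_add_mul_le c hr τ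

theorem exists_smul_apply_eq_one {g : n → ℝ} (hg : g ≠ 0) :
    ∃ j, ∃ a : ℝ, (a • g) j = 1 ∧ ‖a • g‖ ≤ 1 := by
  have hnonempty : Nonempty n := (Function.ne_iff.1 hg).nonempty
  obtain ⟨j, hj⟩ := Finite.exists_max fun k => |g k|
  have hnorm : ‖g‖ = |g j| :=
    le_antisymm ((pi_norm_le_iff_of_nonneg (abs_nonneg _)).2 hj) (norm_le_pi_norm g j)
  have hgj : g j ≠ 0 := abs_pos.1 (hnorm ▸ norm_pos_iff.2 hg)
  refine ⟨j, (g j)⁻¹, inv_mul_cancel₀ hgj, ?_⟩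
  rw [norm_smul, norm_inv, hnorm, Real.norm_eq_abs, inv_mul_cancel₀ (abs_ne_zero.2 hgj)]

theorem exists_normalized_vecMul_eq_zero {B : Matrix m n ℝ} (hB : B.rank < Fintype.card m) :
    ∃ i, ∃ c : m → ℝ, c i = 1 ∧ ‖c‖ ≤ 1 ∧ c ᵥ* B = 0 := by
  have hdep : ¬ Function.Injective B.vecMul := fun hinj =>
    hB.ne (Matrix.vecMul_injective_iff.1 hinj).rank_matrix
  obtain ⟨g, hg, hg0⟩ : ∃ g, g ᵥ* B = 0 ∧ g ≠ 0 := by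
    by_contra! h
    exact hdep ((injective_iff_map_eq_zero B.vecMulLinear).2 h)
  obtain ⟨i, a, hi, hle⟩ := exists_smul_apply_eq_one hg0
  exact ⟨i, a • g, hi, hle, by rw [Matrix.smul_vecMul, hg, smul_zero]⟩

theorem exists_normalized_dotProduct_rows_eq_zero (hmn : Fintype.card m ≤ Fintype.card n) (i : m)
    (B : Matrix m n ℝ) :
    ∃ j, ∃ v : n → ℝ, v j = 1 ∧ ‖v‖ ≤ 1 ∧ ∀ k ≠ i, B k ⬝ᵥ v = 0 := by
  classical
  let others : Matrix n {k // k ≠ i} ℝ := .of fun j k => B k j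
  have hrank : others.rank < Fintype.card n :=
    (Matrix.rank_le_card_width others).trans_lt
      ((Fintype.card_subtype_lt (p := fun k => k ≠ i) (x := i) (by simp)).trans_le hmn)
  obtain ⟨j, v, hvj, hv, hzero⟩ := exists_normalized_vecMul_eq_zero hrank
  exact ⟨j, v, hvj, hv, fun k hk => (dotProduct_comm _ _).trans (congrFun hzero ⟨k, hk⟩)⟩

theorem abs_dotProduct_le_card_mul (v w : n → ℝ) :
    |v ⬝ᵥ w| ≤ Fintype.card n * (‖v‖ * ‖w‖) := by
  calc |v ⬝ᵥ w| ≤ ∑ j, |v j * w j| := Finset.abs_sum_le_sum_abs _ _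
    _ ≤ ∑ _j : n, ‖v‖ * ‖w‖ := Finset.sum_le_sum fun j _ => by
        rw [abs_mul]
        exact mul_le_mul (norm_le_pi_norm v j) (norm_le_pi_norm w j) (abs_nonneg _) (norm_nonneg _)
    _ = Fintype.card n * (‖v‖ * ‖w‖) := by simp

/-- The matrices with a combination of rows of sup norm at most `τ` in which row `i` has
coefficient `1` and no coefficient exceeds `1` in absolute value. Fixing the dominant row `i` is
what makes the condition linear in that row. -/
def nearlyDependentOn (i : m) (τ : ℝ) : Set (Matrix m n ℝ) :=
  {B | ∃ c : m → ℝ, c i = 1 ∧ ‖c‖ ≤ 1 ∧ ‖c ᵥ* B‖ ≤ τ}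

/-- The matrices with a combination of rows of sup norm at most `τ` whose coefficient vector has
sup norm `1`: a quantitative form of `rank < card m`. -/
def nearlyDependent (τ : ℝ) : Set (Matrix m n ℝ) := ⋃ i, nearlyDependentOn i τ

theorem isClosed_nearlyDependentOn (i : m) (τ : ℝ) :
    IsClosed (nearlyDependentOn i τ : Set (Matrix m n ℝ)) := by
  let K : Set (m → ℝ) := {c | c i = 1} ∩ Metric.closedBall 0 1
  have hK : IsCompact K := (isCompact_closedBall 0 1).inter_left
    (isClosed_eq (continuous_apply i) continuous_const)
  have : CompactSpace K := isCompact_iff_compactSpace.1 hK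
  have hclosed : IsClosed {p : K × Matrix m n ℝ | ‖(p.1 : m → ℝ) ᵥ* p.2‖ ≤ τ} :=
    isClosed_le (by fun_prop) continuous_const
  convert isClosedMap_snd_of_compactSpace _ hclosed using 1
  ext B
  simp [nearlyDependentOn, K, and_assoc]

theorem isClosed_nearlyDependent (τ : ℝ) :
    IsClosed (nearlyDependent τ : Set (Matrix m n ℝ)) :=
  isClosed_iUnion_of_finite fun i => isClosed_nearlyDependentOn i τ

theorem mem_nearlyDependent_of_rank_lt {B B' : Matrix m n ℝ} {η : ℝ} (hη0 : 0 ≤ η)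
    (hB : B.rank < Fintype.card m) (hη : ∀ i j, |B' i j - B i j| ≤ η) :
    B' ∈ nearlyDependent (Fintype.card m * η) := by
  obtain ⟨i, c, hci, hc, hzero⟩ := exists_normalized_vecMul_eq_zero hB
  refine mem_iUnion.2 ⟨i, c, hci, hc, ?_⟩
  have hdiff : c ᵥ* B' = c ᵥ* (B' - B) := by rw [Matrix.vecMul_sub, hzero, sub_zero]
  rw [hdiff, pi_norm_le_iff_of_nonneg (by positivity)]
  intro j
  have hcol : ‖fun k => (B' - B) k j‖ ≤ η := (pi_norm_le_iff_of_nonneg hη0).2 fun k => hη k j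
  calc ‖(c ᵥ* (B' - B)) j‖ ≤ Fintype.card m * (‖c‖ * ‖fun k => (B' - B) k j‖) :=
        abs_dotProduct_le_card_mul _ _
    _ ≤ Fintype.card m * (1 * η) := by gcongr
    _ = Fintype.card m * η := by rw [one_mul]

theorem abs_row_dotProduct_le_of_mem_nearlyDependentOn {i : m} {τ : ℝ} {B : Matrix m n ℝ}
    (hB : B ∈ nearlyDependentOn i τ) {v : n → ℝ} (hv : ‖v‖ ≤ 1)
    (horth : ∀ k ≠ i, B k ⬝ᵥ v = 0) : |B i ⬝ᵥ v| ≤ Fintype.card n * τ := by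
  obtain ⟨c, hci, -, hc⟩ := hB
  have hrow : (c ᵥ* B) ⬝ᵥ v = B i ⬝ᵥ v :=
    calc (c ᵥ* B) ⬝ᵥ v = ∑ k, c k * (B k ⬝ᵥ v) := (Matrix.dotProduct_mulVec c B v).symm
      _ = c i * (B i ⬝ᵥ v) :=
        Finset.sum_eq_single i (fun k _ hk => by rw [horth k hk, mul_zero]) (by simp)
      _ = B i ⬝ᵥ v := by rw [hci, one_mul]
  calc |B i ⬝ᵥ v| = |(c ᵥ* B) ⬝ᵥ v| := by rw [hrow]
    _ ≤ Fintype.card n * (‖c ᵥ* B‖ * ‖v‖) := abs_dotProduct_le_card_mul _ _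
    _ ≤ Fintype.card n * (τ * 1) := by gcongr; exact (norm_nonneg _).trans hc
    _ = Fintype.card n * τ := by rw [mul_one]

/-- The matrix `r A`, for `A` with entries in `[0, 1]`. With `A` uniformly distributed this is the
random perturbation of the derivative. -/
def scaledMatrix (r : ℝ) (A : m → n → unitInterval) : Matrix m n ℝ := .of fun i j => r * A i j

omit [Fintype m] [Fintype n] in
theorem continuous_scaledMatrix (r : ℝ) :
    Continuous (scaledMatrix r : (m → n → unitInterval) → Matrix m n ℝ) := by
  unfold scaledMatrix
  fun_prop

theorem volume_add_scaledMatrix_mem_nearlyDependentOn_le (hmn : Fintype.card m ≤ Fintype.card n)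
    (M : Matrix m n ℝ) {r : ℝ} (hr : 0 < r) (i : m) (τ : ℝ) :
    volume {A : m → n → unitInterval | M + scaledMatrix r A ∈ nearlyDependentOn i τ} ≤
      ENNReal.ofReal (2 * (Fintype.card n * τ) / r) := by
  classical
  have hmeas : MeasurableSet
      {A : m → n → unitInterval | M + scaledMatrix r A ∈ nearlyDependentOn i τ} :=
    ((isClosed_nearlyDependentOn i τ).preimage
      (continuous_const.add (continuous_scaledMatrix r))).measurableSet
  refine measure_pi_le_of_forall_update hmeas i fun A => ?_
  obtain ⟨j, v, hvj, hv, horth⟩ :=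
    exists_normalized_dotProduct_rows_eq_zero hmn i (M + scaledMatrix r A)
  have hsub : {a | M + scaledMatrix r (Function.update A i a) ∈ nearlyDependentOn i τ} ⊆
      {a | |(fun l => M i l + r * (a l : ℝ)) ⬝ᵥ v| ≤ Fintype.card n * τ} := by
    intro a ha
    have hrows : ∀ k ≠ i, (M + scaledMatrix r (Function.update A i a)) k ⬝ᵥ v = 0 := by
      intro k hk
      rw [← horth k hk]
      congr 1
      ext l
      simp [scaledMatrix, hk]
    have hrow : (M + scaledMatrix r (Function.update A i a)) i = fun l => M i l + r * a l := by
      ext l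
      simp [scaledMatrix]
    have hbound := abs_row_dotProduct_le_of_mem_nearlyDependentOn ha hv hrows
    rwa [hrow] at hbound
  exact (measure_mono hsub).trans (volume_abs_dotProduct_add_mul_le _ hr hvj _)

theorem volume_add_scaledMatrix_mem_nearlyDependent_le (hmn : Fintype.card m ≤ Fintype.card n)
    (M : Matrix m n ℝ) {r : ℝ} (hr : 0 < r) (τ : ℝ) :
    volume {A : m → n → unitInterval | M + scaledMatrix r A ∈ nearlyDependent τ} ≤
      ENNReal.ofReal (Fintype.card m * (2 * (Fintype.card n * τ) / r)) := by
  simp only [nearlyDependent, mem_iUnion, ofPred_exists]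
  calc _ ≤ ∑ i, volume {A : m → n → unitInterval | M + scaledMatrix r A ∈ nearlyDependentOn i τ} :=
        measure_iUnion_fintype_le _ _
    _ ≤ ∑ _i : m, ENNReal.ofReal (2 * (Fintype.card n * τ) / r) := Finset.sum_le_sum fun i _ =>
        volume_add_scaledMatrix_mem_nearlyDependentOn_le hmn M hr i τ
    _ = _ := by simp [ENNReal.ofReal_mul]

end RandomMatrix

section Covering

open Filter

theorem hausdorffMeasure_le_liminf_sum_subtype {X : Type*} [EMetricSpace X] [MeasurableSpace X]
    [BorelSpace X] {ι : ℕ → Type*} [∀ n, Fintype (ι n)] {s : ℝ} (hs : 0 ≤ s)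
    {cell : ∀ n, ι n → Set X} {ρ : ℕ → ℝ≥0∞} (hρ : Tendsto ρ atTop (𝓝 0))
    (hcell : ∀ n k, Metric.ediam (cell n k) ≤ ρ n) {S : Set X} {active : ∀ n, Set (ι n)}
    (hcover : ∀ᶠ n in atTop, ∀ x ∈ S, ∃ k ∈ active n, x ∈ cell n k) :
    μH[s] S ≤ liminf (fun n => ∑ k, (active n).indicator (fun _ => ρ n ^ s) k) atTop := by
  classical
  refine (Measure.hausdorffMeasure_le_liminf_sum (ι := fun n => active n) s S ρ hρ
    (fun n k => cell n k) (.of_forall fun n k => hcell n k) ?_).trans ?_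
  · filter_upwards [hcover] with n hn x hx
    obtain ⟨k, hk, hxk⟩ := hn x hx
    exact mem_iUnion.2 ⟨⟨k, hk⟩, hxk⟩
  · refine liminf_le_liminf (.of_forall fun n => ?_)
    calc ∑ k : active n, Metric.ediam (cell n k) ^ s ≤ ∑ _k : active n, ρ n ^ s :=
          Finset.sum_le_sum fun k _ => ENNReal.rpow_le_rpow (hcell n k) hs
      _ = ∑ k, (active n).indicator (fun _ => ρ n ^ s) k := by
          simp only [indicator_apply, ← Finset.sum_filter]
          exact (Finset.sum_subtype {k | k ∈ active n} (p := (· ∈ active n)) (by simp)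
            fun _ => ρ n ^ s).symm

theorem exists_hausdorffMeasure_le_of_random_cover {Ω X : Type*} [MeasurableSpace Ω]
    {P : Measure Ω} [IsProbabilityMeasure P] [EMetricSpace X] [MeasurableSpace X] [BorelSpace X]
    {ι : ℕ → Type*} [∀ n, Fintype (ι n)] {s : ℝ} (hs : 0 ≤ s) {cell : ∀ n, ι n → Set X}
    {ρ : ℕ → ℝ≥0∞} (hρ : Tendsto ρ atTop (𝓝 0)) (hcell : ∀ n k, Metric.ediam (cell n k) ≤ ρ n)
    {event : ∀ n, ι n → Set Ω} (hevent : ∀ n k, MeasurableSet (event n k)) {S : Ω → Set X}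
    (hcover : ∀ᶠ n in atTop, ∀ ω, ∀ x ∈ S ω, ∃ k, ω ∈ event n k ∧ x ∈ cell n k) {C : ℝ≥0∞}
    (hsum : ∀ᶠ n in atTop, ∑ k, ρ n ^ s * P (event n k) ≤ C) :
    ∃ ω, μH[s] (S ω) ≤ C := by
  let cost (n : ℕ) (ω : Ω) : ℝ≥0∞ := ∑ k, (event n k).indicator (fun _ => ρ n ^ s) ω
  have hcost : ∀ n, Measurable (cost n) := fun n =>
    Finset.measurable_fun_sum _ fun k _ => measurable_const.indicator (hevent n k)
  have hmean : ∀ n, ∫⁻ ω, cost n ω ∂P = ∑ k, ρ n ^ s * P (event n k) := fun n =>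
    (lintegral_finsetSum _ fun k _ => measurable_const.indicator (hevent n k)).trans
      (Finset.sum_congr rfl fun k _ => lintegral_indicator_const (hevent n k) _)
  have hfatou : ∫⁻ ω, liminf (cost · ω) atTop ∂P ≤ C :=
    (lintegral_liminf_le hcost).trans <| liminf_le_of_frequently_le' <|
      (hsum.mono fun n hn => (hmean n).trans_le hn).frequently
  obtain ⟨ω, hω⟩ := exists_le_lintegral (Measurable.liminf hcost).aemeasurable (μ := P)
  exact ⟨ω, (hausdorffMeasure_le_liminf_sum_subtype hs hρ hcell
    (active := fun n => {k | ω ∈ event n k}) (hcover.mono fun n hn => hn ω)).trans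
    (hω.trans hfatou)⟩

end Covering

section Grid

open Filter

theorem norm_le_sqrt_card_mul_norm_ofLp {ι : Type*} [Fintype ι] (x : EuclideanSpace ℝ ι) :
    ‖x‖ ≤ √(Fintype.card ι) * ‖x.ofLp‖ := by
  rw [EuclideanSpace.norm_eq, ← Real.sqrt_sq (norm_nonneg x.ofLp),
    ← Real.sqrt_mul (Nat.cast_nonneg _), ← nsmul_eq_mul]
  exact Real.sqrt_le_sqrt (Finset.sum_le_card_nsmul _ _ _ fun i _ =>
    pow_le_pow_left₀ (norm_nonneg _) (norm_le_pi_norm x.ofLp i) 2)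

theorem dist_le_sqrt_mul_dist_ofLp {d : ℕ} (x y : E d) :
    dist x y ≤ √d * dist x.ofLp y.ofLp := by
  simpa only [dist_eq_norm, WithLp.ofLp_sub, Fintype.card_fin] using
    norm_le_sqrt_card_mul_norm_ofLp (x - y)

variable {d : ℕ}

/-- The corner, with all coordinates minimal, of the cube of index `k` in the grid of mesh
`1 / N`. -/
noncomputable def gridPoint (N : ℕ) (k : Fin d → Fin N) : E d := WithLp.toLp 2 fun i => k i / N

/-- The closed cube of side `1 / N` with corner `gridPoint N k`. -/
noncomputable def gridCell (N : ℕ) (k : Fin d → Fin N) : Set (E d) :=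
  {x | ∀ i, x i ∈ Icc ((k i : ℝ) / N) (((k i : ℝ) + 1) / N)}

theorem dist_ofLp_le_of_mem_gridCell {N : ℕ} {k : Fin d → Fin N} {x y : E d}
    (hx : x ∈ gridCell N k) (hy : y ∈ gridCell N k) : dist x.ofLp y.ofLp ≤ 1 / N :=
  (dist_pi_le_iff (by positivity)).2 fun i =>
    (Real.dist_le_of_mem_Icc (hx i) (hy i)).trans_eq (by ring)

theorem ediam_gridCell_le (N : ℕ) (k : Fin d → Fin N) :
    Metric.ediam (gridCell N k) ≤ ENNReal.ofReal (√d / N) := by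
  refine Metric.ediam_le fun x hx y hy => ?_
  rw [edist_dist]
  refine ENNReal.ofReal_le_ofReal ?_
  calc dist x y ≤ √d * dist x.ofLp y.ofLp := dist_le_sqrt_mul_dist_ofLp x y
    _ ≤ √d * (1 / N) := by
        gcongr
        exact dist_ofLp_le_of_mem_gridCell hx hy
    _ = √d / N := mul_one_div _ _

theorem gridPoint_mem_gridCell (N : ℕ) (k : Fin d → Fin N) : gridPoint N k ∈ gridCell N k :=
  fun i => ⟨le_rfl, by simp only [gridPoint]; gcongr; linarith⟩

theorem gridPoint_mem_unitCube (N : ℕ) (k : Fin d → Fin N) : gridPoint N k ∈ unitCube d :=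
  fun i => ⟨by simp only [gridPoint]; positivity,
    div_le_one_of_le₀ (by exact_mod_cast (k i).is_lt.le) N.cast_nonneg⟩

theorem openCube_subset_unitCube : openCube d ⊆ unitCube d :=
  fun _ hx i => Ioo_subset_Icc_self (hx i)

theorem exists_mem_gridCell {N : ℕ} (hN : 0 < N) {x : E d} (hx : x ∈ openCube d) :
    ∃ k, x ∈ gridCell N k := by
  have hN' : (0 : ℝ) < N := by exact_mod_cast hN
  have hfloor : ∀ i, ⌊x i * N⌋₊ < N := fun i =>
    (Nat.floor_lt (mul_nonneg (hx i).1.le hN'.le)).2 (mul_lt_of_lt_one_left hN' (hx i).2)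
  refine ⟨fun i => ⟨⌊x i * N⌋₊, hfloor i⟩, fun i => ⟨?_, ?_⟩⟩
  · exact (div_le_iff₀ hN').2 (Nat.floor_le (mul_nonneg (hx i).1.le hN'.le))
  · exact (le_div_iff₀ hN').2 (Nat.lt_floor_add_one _).le

theorem sum_gridCells_rpow_mul_ofReal (hd : 1 ≤ d) {N : ℕ} (hN : 0 < N) (c : ℝ) :
    ∑ _k : Fin d → Fin N, ENNReal.ofReal (√d / N) ^ ((d : ℝ) - 1) * ENNReal.ofReal (c / N) =
      ENNReal.ofReal (c * √d ^ (d - 1)) := by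
  have : (N : ℝ) ≠ 0 := by exact_mod_cast hN.ne'
  have hNpow : (N : ℝ) ^ d = N ^ (d - 1) * N := (pow_sub_one_mul (by omega) _).symm
  rw [← Nat.cast_pred hd, ENNReal.rpow_natCast, ← ENNReal.ofReal_pow (by positivity),
    ← ENNReal.ofReal_mul (by positivity), Finset.sum_const, nsmul_eq_mul, Finset.card_univ,
    Fintype.card_fun, Fintype.card_fin, Fintype.card_fin, ← ENNReal.ofReal_natCast,
    ← ENNReal.ofReal_mul (by positivity), Nat.cast_pow, hNpow]
  congr 1
  rw [div_pow]
  field_simp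

end Grid

section Perturbation

/-- The linear map with matrix `B` between Euclidean spaces. -/
noncomputable def matrixCLM {m n : ℕ} (B : Matrix (Fin m) (Fin n) ℝ) : E n →L[ℝ] E m :=
  LinearMap.toContinuousLinearMap (Matrix.toEuclideanLin B)

theorem norm_matrixCLM_le {m n : ℕ} {B : Matrix (Fin m) (Fin n) ℝ} {r : ℝ} (hr : 0 ≤ r)
    (hB : ∀ i j, |B i j| ≤ r) : ‖matrixCLM B‖ ≤ √m * (√n * r) := by
  refine ContinuousLinearMap.opNorm_le_bound _ (by positivity) fun x => ?_
  have hrow : ∀ i, ‖(WithLp.toLp 2 (B i) : E n)‖ ≤ √n * r := fun i => by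
    refine (norm_le_sqrt_card_mul_norm_ofLp _).trans ?_
    rw [Fintype.card_fin]
    gcongr
    exact (pi_norm_le_iff_of_nonneg hr).2 (hB i)
  have hcoord : ‖(matrixCLM B x).ofLp‖ ≤ √n * r * ‖x‖ := by
    refine (pi_norm_le_iff_of_nonneg (by positivity)).2 fun i => ?_
    calc ‖(matrixCLM B x).ofLp i‖ = ‖inner ℝ x (WithLp.toLp 2 (B i) : E n)‖ := rfl
      _ ≤ ‖x‖ * ‖(WithLp.toLp 2 (B i) : E n)‖ := norm_inner_le_norm _ _
      _ ≤ √n * r * ‖x‖ := by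
          rw [mul_comm]
          gcongr
          exact hrow i
  calc ‖matrixCLM B x‖ ≤ √m * ‖(matrixCLM B x).ofLp‖ := by
        simpa only [Fintype.card_fin] using norm_le_sqrt_card_mul_norm_ofLp (matrixCLM B x)
    _ ≤ √m * (√n * r * ‖x‖) := by gcongr
    _ = √m * (√n * r) * ‖x‖ := (mul_assoc _ _ _).symm

theorem abs_scaledMatrix_apply_le {m n : Type*} {r : ℝ} (hr : 0 ≤ r) (A : m → n → unitInterval)
    (i : m) (j : n) : |scaledMatrix r A i j| ≤ r := by
  rw [scaledMatrix, Matrix.of_apply, abs_of_nonneg (mul_nonneg hr (A i j).2.1)]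
  exact mul_le_of_le_one_right hr (A i j).2.2

variable {m d : ℕ}

theorem jac_add_matrixCLM {F : E d → E m} {x : E d} (hF : DifferentiableAt ℝ F x)
    (B : Matrix (Fin m) (Fin d) ℝ) : jac (F + ⇑(matrixCLM B)) x = jac F x + B := by
  ext i j
  rw [jac, Matrix.of_apply, fderiv_add hF (matrixCLM B).differentiableAt,
    ContinuousLinearMap.fderiv]
  simp [jac, matrixCLM, EuclideanSpace.single]

theorem abs_jac_sub_jac_apply_le (F : E d → E m) (x y : E d) (i : Fin m) (j : Fin d) :
    |jac F x i j - jac F y i j| ≤ dist (fderiv ℝ F x) (fderiv ℝ F y) :=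
  calc |jac F x i j - jac F y i j|
      = ‖((fderiv ℝ F x - fderiv ℝ F y) (EuclideanSpace.single j 1)) i‖ := rfl
    _ ≤ ‖(fderiv ℝ F x - fderiv ℝ F y) (EuclideanSpace.single j 1)‖ := PiLp.norm_apply_le _ i
    _ ≤ ‖fderiv ℝ F x - fderiv ℝ F y‖ := by
        simpa using (fderiv ℝ F x - fderiv ℝ F y).le_opNorm (EuclideanSpace.single j 1)
    _ = dist (fderiv ℝ F x) (fderiv ℝ F y) := (dist_eq_norm _ _).symm

theorem jac_add_mem_nearlyDependent_of_mem_critSet (hm : 1 ≤ m) {F : E d → E m} {x y : E d}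
    (hF : DifferentiableAt ℝ F x) {B : Matrix (Fin m) (Fin d) ℝ}
    (hx : x ∈ critSet (F + ⇑(matrixCLM B))) {η : ℝ}
    (hxy : dist (fderiv ℝ F y) (fderiv ℝ F x) ≤ η) :
    jac F y + B ∈ nearlyDependent (m * η) := by
  have hrank : (jac F x + B).rank < Fintype.card (Fin m) := by
    rw [← jac_add_matrixCLM hF, Fintype.card_fin]
    exact hx.2.trans_lt (Nat.sub_lt hm one_pos)
  simpa only [Fintype.card_fin] using
    mem_nearlyDependent_of_rank_lt (B' := jac F y + B) (dist_nonneg.trans hxy) hrank fun i j => by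
      rw [Matrix.add_apply, Matrix.add_apply, add_sub_add_right_eq_sub]
      exact (abs_jac_sub_jac_apply_le F y x i j).trans hxy

open Filter in
theorem exists_hausdorffMeasure_critSet_le (hm : 1 ≤ m) (hmd : m ≤ d) {F : E d → E m}
    (hF : Differentiable ℝ F) {r s L : ℝ} (hr : 0 < r) (hs : 0 < s) (hL : 0 ≤ L)
    (hLip : ∀ x ∈ unitCube d, ∀ y ∈ unitCube d, dist x.ofLp y.ofLp ≤ s →
      dist (fderiv ℝ F x) (fderiv ℝ F y) ≤ L * dist x.ofLp y.ofLp) :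
    ∃ A : Fin m → Fin d → unitInterval,
      μH[(d : ℝ) - 1] (critSet (F + ⇑(matrixCLM (scaledMatrix r A)))) ≤
        ENNReal.ofReal (2 * m ^ 2 * d * L * √d ^ (d - 1) / r) := by
  have hd : 1 ≤ d := hm.trans hmd
  let event (N : ℕ) (k : Fin d → Fin N) : Set (Fin m → Fin d → unitInterval) :=
    {A | jac F (gridPoint N k) + scaledMatrix r A ∈ nearlyDependent (m * (L * (1 / N)))}
  have hevent : ∀ N k, MeasurableSet (event N k) := fun N k =>
    ((isClosed_nearlyDependent _).preimage
      (continuous_const.add (continuous_scaledMatrix r))).measurableSet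
  have hmesh : Tendsto (fun N : ℕ => ENNReal.ofReal (√d / N)) atTop (𝓝 0) :=
    ENNReal.ofReal_zero ▸ ENNReal.tendsto_ofReal (tendsto_const_div_atTop_nhds_zero_nat _)
  refine exists_hausdorffMeasure_le_of_random_cover (P := volume) (by simpa using hd)
    hmesh (fun N k => ediam_gridCell_le N k) hevent ?_ ?_
  · filter_upwards [tendsto_one_div_atTop_nhds_zero_nat.eventually_le_const hs,
      eventually_gt_atTop 0] with N hNs hN A x hx
    obtain ⟨k, hk⟩ := exists_mem_gridCell hN hx.1
    have hdist := dist_ofLp_le_of_mem_gridCell (gridPoint_mem_gridCell N k) hk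
    refine ⟨k, jac_add_mem_nearlyDependent_of_mem_critSet hm (hF x) hx ?_, hk⟩
    calc dist (fderiv ℝ F (gridPoint N k)) (fderiv ℝ F x)
        ≤ L * dist (gridPoint N k).ofLp x.ofLp := hLip _ (gridPoint_mem_unitCube N k) _
          (openCube_subset_unitCube hx.1) (hdist.trans hNs)
      _ ≤ L * (1 / N) := by gcongr
  · filter_upwards [eventually_gt_atTop 0] with N hN
    calc ∑ k, ENNReal.ofReal (√d / N) ^ ((d : ℝ) - 1) * volume (event N k)
        ≤ ∑ _k : Fin d → Fin N, ENNReal.ofReal (√d / N) ^ ((d : ℝ) - 1) *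
          ENNReal.ofReal (2 * m ^ 2 * d * L / r / N) := by
          gcongr with k
          refine (volume_add_scaledMatrix_mem_nearlyDependent_le (by simpa using hmd) _ hr
            _).trans_eq ?_
          rw [Fintype.card_fin, Fintype.card_fin]
          congr 1
          ring
      _ = ENNReal.ofReal (2 * m ^ 2 * d * L / r * √d ^ (d - 1)) :=
          sum_gridCells_rpow_mul_ofReal hd hN _
      _ = ENNReal.ofReal (2 * m ^ 2 * d * L * √d ^ (d - 1) / r) := by rw [div_mul_eq_mul_div]

end Perturbation

section Averaging

theorem norm_setIntegral_sub_setIntegral_le {α X : Type*} [MeasurableSpace α]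
    [NormedAddCommGroup X] [NormedSpace ℝ X] {μ : Measure α} {A B : Set α}
    (hA : MeasurableSet A) (hB : MeasurableSet B) (hμA : μ A ≠ ∞) (hμ : μ A = μ B) {g : α → X}
    (hgA : IntegrableOn g A μ) (hgB : IntegrableOn g B μ) {W : ℝ}
    (hW : ∀ a ∈ A ∪ B, ‖g a‖ ≤ W) :
    ‖(∫ a in A, g a ∂μ) - ∫ a in B, g a ∂μ‖ ≤ 2 * W * μ.real (A \ B) := by
  have hμB : μ B ≠ ∞ := hμ ▸ hμA
  have hdiff : (∫ a in A, g a ∂μ) - ∫ a in B, g a ∂μ =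
      (∫ a in A \ B, g a ∂μ) - ∫ a in B \ A, g a ∂μ := by
    rw [← integral_inter_add_sdiff hB hgA, ← integral_inter_add_sdiff hA hgB, inter_comm B A,
      add_sub_add_left_eq_sub]
  have hreal : μ.real (B \ A) = μ.real (A \ B) := by
    have hA' := measureReal_inter_add_sdiff (s := A) hB hμA
    have hB' := measureReal_inter_add_sdiff (s := B) hA hμB
    have hAB : μ.real A = μ.real B := congrArg ENNReal.toReal hμ
    rw [inter_comm] at hB'
    linarith
  have hnormA : ‖∫ a in A \ B, g a ∂μ‖ ≤ W * μ.real (A \ B) :=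
    norm_setIntegral_le_of_norm_le_const ((measure_mono sdiff_subset).trans_lt hμA.lt_top)
      fun a ha => hW a (.inl ha.1)
  have hnormB : ‖∫ a in B \ A, g a ∂μ‖ ≤ W * μ.real (A \ B) :=
    hreal ▸ norm_setIntegral_le_of_norm_le_const ((measure_mono sdiff_subset).trans_lt hμB.lt_top)
      fun a ha => hW a (.inr ha.1)
  calc ‖(∫ a in A, g a ∂μ) - ∫ a in B, g a ∂μ‖
      ≤ ‖∫ a in A \ B, g a ∂μ‖ + ‖∫ a in B \ A, g a ∂μ‖ := hdiff ▸ norm_sub_le _ _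
    _ ≤ 2 * W * μ.real (A \ B) := by linarith

variable {ι : Type*} [Fintype ι]

theorem volume_Icc_translate (h : ι → ℝ) : volume (Icc h (1 + h)) = 1 := by
  simp [Real.volume_Icc_pi]

theorem volume_unitBox : volume (Icc 0 1 : Set (ι → ℝ)) = 1 := by
  simp [Real.volume_Icc_pi]

instance isProbabilityMeasure_restrict_unitBox :
    IsProbabilityMeasure (volume.restrict (Icc 0 1 : Set (ι → ℝ))) :=
  ⟨by rw [Measure.restrict_apply_univ, volume_unitBox]⟩

theorem volume_real_translate_sdiff_unitBox_le {h : ι → ℝ} (hh : ‖h‖ ≤ 1) :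
    volume.real (Icc h (1 + h) \ Icc 0 1) ≤ Fintype.card ι * ‖h‖ := by
  have hside : ∀ i, 1 - |h i| = min (1 + h i) 1 - max (h i) 0 := fun i => by
    rcases le_total 0 (h i) with h0 | h0
    · rw [max_eq_left h0, min_eq_right (by linarith), abs_of_nonneg h0]
    · rw [max_eq_right h0, min_eq_left (by linarith), abs_of_nonpos h0]
      ring
  have hcoord : ∀ i, |h i| ≤ ‖h‖ := norm_le_pi_norm h
  have hinter : volume.real (Icc h (1 + h) ∩ Icc 0 1) = ∏ i, (1 - |h i|) := by
    rw [Icc_inter_Icc, Measure.real, Real.volume_Icc_pi, ENNReal.toReal_prod]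
    refine Finset.prod_congr rfl fun i _ => ?_
    rw [hside]
    exact ENNReal.toReal_ofReal ((sub_nonneg.2 ((hcoord i).trans hh)).trans_eq (hside i))
  have hbernoulli : 1 - Fintype.card ι * ‖h‖ ≤ ∏ i, (1 - |h i|) :=
    calc 1 - Fintype.card ι * ‖h‖ = 1 + Fintype.card ι * -‖h‖ := by ring
      _ ≤ (1 + -‖h‖) ^ Fintype.card ι := one_add_mul_le_pow (by linarith) _
      _ = ∏ _i : ι, (1 - ‖h‖) := by rw [Finset.prod_const, Finset.card_univ, sub_eq_add_neg]
      _ ≤ ∏ i, (1 - |h i|) := Finset.prod_le_prod (fun _ _ => sub_nonneg.2 hh)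
          fun i _ => sub_le_sub_left (hcoord i) 1
  have hsplit := measureReal_inter_add_sdiff (μ := volume) (s := Icc h (1 + h))
    (t := Icc (0 : ι → ℝ) 1) measurableSet_Icc (by simp [volume_Icc_translate])
  have hone : volume.real (Icc h (1 + h)) = 1 := by simp [Measure.real, volume_Icc_translate]
  linarith

variable {X : Type*} [NormedAddCommGroup X] [NormedSpace ℝ X]

theorem norm_setIntegral_unitBox_add_sub_le [CompleteSpace X] {g : (ι → ℝ) → X}
    (hg : Continuous g) {h : ι → ℝ} (hh : ‖h‖ ≤ 1) {c : X} {W : ℝ}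
    (hW : ∀ u ∈ Icc (0 : ι → ℝ) 1, ‖g u - c‖ ≤ W)
    (hWh : ∀ u ∈ Icc (0 : ι → ℝ) 1, ‖g (u + h) - c‖ ≤ W) :
    ‖(∫ u in Icc 0 1, g (u + h)) - ∫ u in Icc 0 1, g u‖ ≤ 2 * W * (Fintype.card ι * ‖h‖) := by
  have htranslate : ∫ u in Icc 0 1, g (u + h) = ∫ u in Icc h (1 + h), g u := by
    have hpre : (· + h) ⁻¹' Icc h (1 + h) = Icc (0 : ι → ℝ) 1 := by
      rw [preimage_add_const_Icc, sub_self, add_sub_cancel_right]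
    rw [← hpre]
    exact (measurePreserving_add_right volume h).setIntegral_preimage_emb
      (measurableEmbedding_addRight h) g _
  have hintegrable : ∀ a b : ι → ℝ, IntegrableOn (fun u => g u - c) (Icc a b) :=
    fun a b => (hg.sub continuous_const).continuousOn.integrableOn_Icc
  have hcenter : ∀ b : ι → ℝ,
      ∫ u in Icc b (1 + b), g u = (∫ u in Icc b (1 + b), (g u - c)) + c := by
    intro b
    rw [integral_sub hg.continuousOn.integrableOn_Icc
      continuous_const.continuousOn.integrableOn_Icc]
    simp [Measure.real, volume_Icc_translate]
  have hW0 : 0 ≤ W := (norm_nonneg _).trans (hW 0 (by simp))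
  have hcenter0 := hcenter 0
  rw [add_zero] at hcenter0
  rw [htranslate, hcenter, hcenter0, add_sub_add_right_eq_sub]
  refine (norm_setIntegral_sub_setIntegral_le measurableSet_Icc measurableSet_Icc
    (by simp [volume_Icc_translate]) ((volume_Icc_translate h).trans volume_unitBox.symm)
    (hintegrable _ _) (hintegrable _ _) ?_).trans
    (mul_le_mul_of_nonneg_left (volume_real_translate_sdiff_unitBox_le hh) (by positivity))
  rintro u (hu | hu)
  · simpa using hWh (u - h) ⟨by simpa using hu.1, by simpa using hu.2⟩
  · exact hW u hu

end Averaging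

section UnitCube

variable {d : ℕ}

theorem mem_unitCube_iff {x : E d} : x ∈ unitCube d ↔ x.ofLp ∈ Icc (0 : Fin d → ℝ) 1 := by
  simp only [unitCube, mem_ofPred_eq, mem_Icc, Pi.le_def, forall_and, Pi.zero_apply, Pi.one_apply]

theorem convex_unitCube (d : ℕ) : Convex ℝ (unitCube d) := by
  rw [show unitCube d = WithLp.ofLp ⁻¹' Icc 0 1 from Set.ext fun _ => mem_unitCube_iff]
  exact (convex_Icc 0 1).linear_preimage (WithLp.linearEquiv 2 ℝ (Fin d → ℝ)).toLinearMap

theorem isCompact_unitCube (d : ℕ) : IsCompact (unitCube d) := by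
  rw [show unitCube d = WithLp.ofLp ⁻¹' Icc 0 1 from Set.ext fun _ => mem_unitCube_iff]
  exact (PiLp.homeomorph 2 fun _ : Fin d => ℝ).isCompact_preimage.2 isCompact_Icc

theorem zero_mem_unitCube (d : ℕ) : (0 : E d) ∈ unitCube d :=
  mem_unitCube_iff.2 ⟨le_rfl, zero_le_one⟩

theorem dist_ofLp_le_one {x y : E d} (hx : x ∈ unitCube d) (hy : y ∈ unitCube d) :
    dist x.ofLp y.ofLp ≤ 1 :=
  (dist_pi_le_iff zero_le_one).2 fun i => Real.dist_le_of_mem_Icc_01 (hx i) (hy i)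

theorem norm_le_sqrt_of_mem_unitCube {x : E d} (hx : x ∈ unitCube d) : ‖x‖ ≤ √d := by
  have hx0 := (dist_le_sqrt_mul_dist_ofLp x 0).trans
    (mul_le_of_le_one_right (Real.sqrt_nonneg _) (dist_ofLp_le_one hx (zero_mem_unitCube d)))
  rwa [dist_zero_right] at hx0

theorem dist_le_natCast_mul_of_convex {V X : Type*} [NormedAddCommGroup V] [NormedSpace ℝ V]
    [PseudoMetricSpace X] {S : Set V} (hS : Convex ℝ S) {g : V → X} {η W : ℝ}
    (hg : ∀ x ∈ S, ∀ y ∈ S, dist x y ≤ η → dist (g x) (g y) ≤ W) {n : ℕ} {x y : V}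
    (hx : x ∈ S) (hy : y ∈ S) (hxy : dist x y ≤ n * η) : dist (g x) (g y) ≤ n * W := by
  rcases n.eq_zero_or_pos with rfl | hn
  · obtain rfl : x = y := dist_le_zero.1 (by simpa using hxy)
    simp
  have hn' : (0 : ℝ) < n := Nat.cast_pos.2 hn
  let p (k : ℕ) : V := AffineMap.lineMap x y (k / n : ℝ)
  have hpS : ∀ k ≤ n, p k ∈ S := fun k hk => hS.lineMap_mem hx hy
    ⟨by positivity, (div_le_one hn').2 (Nat.cast_le.2 hk)⟩
  have hstep : ∀ k, dist (p k) (p (k + 1)) ≤ η := fun k => by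
    rw [dist_lineMap_lineMap, Nat.cast_succ, dist_comm, Real.dist_eq, ← sub_div,
      add_sub_cancel_left, abs_of_pos (by positivity), one_div_mul_eq_div, div_le_iff₀' hn']
    exact hxy
  have hchain := dist_le_range_sum_of_dist_le (f := fun k => g (p k)) (d := fun _ => W) n
    fun {k} hk => hg _ (hpS k hk.le) _ (hpS (k + 1) hk) (hstep k)
  simpa [p, hn.ne'] using hchain

/-- On the unit cube, `g` varies by at most `W` between points at distance at most `s` in the
sup norm; the latter is the natural one here, since subcubes are its balls. -/
def OscLE {X : Type*} [PseudoMetricSpace X] (g : E d → X) (s W : ℝ) : Prop :=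
  ∀ x ∈ unitCube d, ∀ y ∈ unitCube d, dist x.ofLp y.ofLp ≤ s → dist (g x) (g y) ≤ W

variable {X : Type*} [PseudoMetricSpace X] {g : E d → X} {s W : ℝ}

theorem OscLE.nonneg (hg : OscLE g s W) (hs : 0 ≤ s) : 0 ≤ W := by
  have h0 := zero_mem_unitCube d
  simpa using hg 0 h0 0 h0 (by simpa using hs)

theorem OscLE.dist_le (hg : OscLE g s W) (hs : 0 < s) {x y : E d} (hx : x ∈ unitCube d)
    (hy : y ∈ unitCube d) : dist (g x) (g y) ≤ ⌈1 / s⌉₊ * W := by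
  have hxy : dist x.ofLp y.ofLp ≤ ⌈1 / s⌉₊ * s :=
    (dist_ofLp_le_one hx hy).trans ((div_le_iff₀ hs).1 (Nat.le_ceil _))
  exact dist_le_natCast_mul_of_convex (g := fun u => g (WithLp.toLp 2 u)) (convex_Icc 0 1)
    (fun u hu v hv => hg _ (mem_unitCube_iff.2 hu) _ (mem_unitCube_iff.2 hv))
    (mem_unitCube_iff.1 hx) (mem_unitCube_iff.1 hy) hxy

end UnitCube

section Smoothing

variable {d : ℕ}

/-- For `x` in the unit cube, `u ↦ subcubePoint s x u` parametrizes by the unit cube a cube of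
side `s` which contains `x` and stays inside the unit cube: convolving over these cubes never
evaluates a function outside its domain. -/
noncomputable def subcubePoint (s : ℝ) (x : E d) (u : Fin d → ℝ) : E d :=
  (1 - s) • x + s • WithLp.toLp 2 u

theorem continuous_subcubePoint (s : ℝ) :
    Continuous fun p : E d × (Fin d → ℝ) => subcubePoint s p.1 p.2 := by
  unfold subcubePoint
  fun_prop

theorem hasFDerivAt_subcubePoint (s : ℝ) (u : Fin d → ℝ) (x : E d) :
    HasFDerivAt (fun x => subcubePoint s x u) ((1 - s) • ContinuousLinearMap.id ℝ (E d)) x :=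
  ((hasFDerivAt_id x).const_smul (1 - s)).add_const _

theorem subcubePoint_add_smul {s : ℝ} (hs : s ≠ 0) (x y : E d) (u : Fin d → ℝ) :
    subcubePoint s y (u + ((1 - s) / s) • (x - y).ofLp) = subcubePoint s x u := by
  ext i
  simp only [subcubePoint, PiLp.add_apply, PiLp.smul_apply, PiLp.sub_apply, Pi.add_apply,
    Pi.smul_apply, smul_eq_mul]
  field_simp
  ring

variable {s : ℝ} {x y : E d} {u v : Fin d → ℝ}

theorem subcubePoint_mem_unitCube (hs0 : 0 ≤ s) (hs1 : s ≤ 1) (hx : x ∈ unitCube d)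
    (hu : u ∈ Icc 0 1) : subcubePoint s x u ∈ unitCube d :=
  convex_unitCube d hx (mem_unitCube_iff.2 hu) (sub_nonneg.2 hs1) hs0
    (sub_add_cancel 1 s)

theorem dist_subcubePoint_subcubePoint_le (hs : 0 ≤ s) (x : E d) (hu : u ∈ Icc 0 1)
    (hv : v ∈ Icc 0 1) : dist (subcubePoint s x u).ofLp (subcubePoint s x v).ofLp ≤ s := by
  rw [subcubePoint, subcubePoint, WithLp.ofLp_add, WithLp.ofLp_add, dist_add_left,
    WithLp.ofLp_smul, WithLp.ofLp_smul, dist_smul₀, Real.norm_of_nonneg hs]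
  exact mul_le_of_le_one_right hs
    (dist_ofLp_le_one (x := WithLp.toLp 2 u) (y := WithLp.toLp 2 v) (mem_unitCube_iff.2 hu)
      (mem_unitCube_iff.2 hv))

theorem dist_subcubePoint_self_le (hs : 0 ≤ s) (hx : x ∈ unitCube d) (hu : u ∈ Icc 0 1) :
    dist (subcubePoint s x u).ofLp x.ofLp ≤ s := by
  have hself : subcubePoint s x x.ofLp = x := by
    rw [subcubePoint, WithLp.toLp_ofLp, ← add_smul, sub_add_cancel, one_smul]
  simpa only [hself] using dist_subcubePoint_subcubePoint_le hs x hu (mem_unitCube_iff.1 hx)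

theorem OscLE.dist_subcubePoint_le {X : Type*} [PseudoMetricSpace X] {g : E d → X} {W : ℝ}
    (hosc : OscLE g s W) (hs0 : 0 ≤ s) (hs1 : s ≤ 1) (hx : x ∈ unitCube d) (hu : u ∈ Icc 0 1)
    (hv : v ∈ Icc 0 1) : dist (g (subcubePoint s x u)) (g (subcubePoint s x v)) ≤ W :=
  hosc _ (subcubePoint_mem_unitCube hs0 hs1 hx hu) _ (subcubePoint_mem_unitCube hs0 hs1 hx hv)
    (dist_subcubePoint_subcubePoint_le hs0 x hu hv)

theorem continuous_comp_subcubePoint {X : Type*} [TopologicalSpace X] {g : E d → X}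
    (hg : Continuous g) (s : ℝ) (x : E d) : Continuous fun u => g (subcubePoint s x u) :=
  hg.comp ((continuous_subcubePoint s).comp (Continuous.prodMk_right x))

variable {X : Type*} [NormedAddCommGroup X] [NormedSpace ℝ X]

/-- The average of `g` over the cube of side `s` attached to `x` by `subcubePoint`. -/
noncomputable def cubeAverage (s : ℝ) (g : E d → X) (x : E d) : X :=
  ∫ u in Icc (0 : Fin d → ℝ) 1, g (subcubePoint s x u)

variable {g : E d → X}

theorem continuous_cubeAverage (hg : Continuous g) (s : ℝ) : Continuous (cubeAverage s g) :=
  continuous_parametric_integral_of_continuous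
    (f := fun x u => g (subcubePoint s x u)) (hg.comp (continuous_subcubePoint s)) isCompact_Icc

theorem hasFDerivAt_cubeAverage (hg : ContDiff ℝ 1 g) (s : ℝ) (x : E d) :
    HasFDerivAt (cubeAverage s g) ((1 - s) • cubeAverage s (fderiv ℝ g) x) x := by
  have hg' : Continuous (fderiv ℝ g) := hg.continuous_fderiv one_ne_zero
  have hcont : Continuous fun p : E d × (Fin d → ℝ) =>
      (1 - s) • fderiv ℝ g (subcubePoint s p.1 p.2) :=
    (continuous_const_smul (1 - s)).comp (hg'.comp (continuous_subcubePoint s))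
  obtain ⟨C, hC⟩ := ((isCompact_closedBall x 1).prod
    (isCompact_Icc (a := (0 : Fin d → ℝ)) (b := 1))).exists_bound_of_continuousOn
    hcont.continuousOn
  rw [cubeAverage, ← integral_smul]
  refine hasFDerivAt_integral_of_dominated_of_fderiv_le (𝕜 := ℝ)
    (F := fun x u => g (subcubePoint s x u))
    (F' := fun x u => (1 - s) • fderiv ℝ g (subcubePoint s x u)) (bound := fun _ => C)
    (Metric.closedBall_mem_nhds x one_pos)
    (.of_forall fun y => (continuous_comp_subcubePoint hg.continuous s y).aestronglyMeasurable)
    (continuous_comp_subcubePoint hg.continuous s x).continuousOn.integrableOn_Icc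
    (hcont.comp (Continuous.prodMk_right x)).aestronglyMeasurable ?_ (integrable_const C) ?_
  · filter_upwards [ae_restrict_mem measurableSet_Icc] with u hu y hy
    exact hC (y, u) ⟨hy, hu⟩
  · refine .of_forall fun u y _ => ?_
    have hcomp := (hg.differentiable one_ne_zero (subcubePoint s y u)).hasFDerivAt.comp y
      (hasFDerivAt_subcubePoint s u y)
    rwa [ContinuousLinearMap.comp_smul, ContinuousLinearMap.comp_id] at hcomp

variable [CompleteSpace X]

theorem norm_cubeAverage_sub_le (hg : Continuous g) {c : X} {C : ℝ}
    (hC : ∀ u ∈ Icc 0 1, ‖g (subcubePoint s x u) - c‖ ≤ C) : ‖cubeAverage s g x - c‖ ≤ C := by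
  have hcenter : cubeAverage s g x - c =
      ∫ u in Icc (0 : Fin d → ℝ) 1, (g (subcubePoint s x u) - c) := by
    rw [integral_sub (continuous_comp_subcubePoint hg s x).continuousOn.integrableOn_Icc
      (integrable_const c), integral_const, probReal_univ, one_smul, cubeAverage]
  rw [hcenter]
  simpa [Measure.real, volume_unitBox] using
    norm_setIntegral_le_of_norm_le_const (μ := volume) (by simp [volume_unitBox]) hC

theorem norm_cubeAverage_le (hs0 : 0 ≤ s) (hs1 : s ≤ 1) (hg : Continuous g) {D : ℝ}
    (hD : ∀ x ∈ unitCube d, ‖g x‖ ≤ D) (hx : x ∈ unitCube d) : ‖cubeAverage s g x‖ ≤ D := by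
  rw [← sub_zero (cubeAverage s g x)]
  exact norm_cubeAverage_sub_le hg fun u hu =>
    (sub_zero (g _)).symm ▸ hD _ (subcubePoint_mem_unitCube hs0 hs1 hx hu)

theorem OscLE.dist_cubeAverage_self_le {W : ℝ} (hosc : OscLE g s W) (hg : Continuous g)
    (hs0 : 0 ≤ s) (hs1 : s ≤ 1) (hx : x ∈ unitCube d) : dist (cubeAverage s g x) (g x) ≤ W := by
  rw [dist_eq_norm]
  refine norm_cubeAverage_sub_le hg fun u hu => ?_
  rw [← dist_eq_norm]
  exact hosc _ (subcubePoint_mem_unitCube hs0 hs1 hx hu) _ hx (dist_subcubePoint_self_le hs0 hx hu)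

theorem norm_cubeAverage_sub_self_le_of_norm_fderiv_le (hs0 : 0 ≤ s) (hs1 : s ≤ 1)
    (hg : Differentiable ℝ g) {D : ℝ} (hD : ∀ x ∈ unitCube d, ‖fderiv ℝ g x‖ ≤ D)
    (hx : x ∈ unitCube d) : ‖cubeAverage s g x - g x‖ ≤ D * (√d * s) := by
  have hD0 : 0 ≤ D := (norm_nonneg _).trans (hD x hx)
  refine norm_cubeAverage_sub_le hg.continuous fun u hu => ?_
  calc ‖g (subcubePoint s x u) - g x‖ ≤ D * ‖subcubePoint s x u - x‖ :=
        (convex_unitCube d).norm_image_sub_le_of_norm_fderiv_le (fun y _ => hg y) hD hx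
          (subcubePoint_mem_unitCube hs0 hs1 hx hu)
    _ ≤ D * (√d * s) := by
        gcongr
        rw [← dist_eq_norm]
        exact (dist_le_sqrt_mul_dist_ofLp _ _).trans
          (mul_le_mul_of_nonneg_left (dist_subcubePoint_self_le hs0 hx hu) (Real.sqrt_nonneg _))

/-- The cubes attached to `x` and `y` are translates of each other, so the two averages differ only
through the part of one cube outside the other, of volume `O(|x - y|)`. -/
theorem OscLE.dist_cubeAverage_le {W : ℝ} (hosc : OscLE g s W) (hg : Continuous g)
    (hs0 : 0 < s) (hs1 : s ≤ 1) (hx : x ∈ unitCube d) (hy : y ∈ unitCube d)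
    (hxy : dist x.ofLp y.ofLp ≤ s) :
    dist (cubeAverage s g x) (cubeAverage s g y) ≤
      2 * W * d * ((1 - s) / s) * dist x.ofLp y.ofLp := by
  set h : Fin d → ℝ := ((1 - s) / s) • (x - y).ofLp with hdef
  have hshift : ∀ u, subcubePoint s y (u + h) = subcubePoint s x u :=
    subcubePoint_add_smul hs0.ne' x y
  have hnorm : ‖h‖ = (1 - s) / s * dist x.ofLp y.ofLp := by
    rw [hdef, norm_smul, Real.norm_of_nonneg (div_nonneg (sub_nonneg.2 hs1) hs0.le),
      WithLp.ofLp_sub, dist_eq_norm]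
  have hh : ‖h‖ ≤ 1 :=
    calc ‖h‖ ≤ (1 - s) / s * s := hnorm.trans_le <|
          mul_le_mul_of_nonneg_left hxy (div_nonneg (sub_nonneg.2 hs1) hs0.le)
      _ ≤ 1 := by rw [div_mul_cancel₀ _ hs0.ne']; linarith
  -- `0 ⊔ h` lies in both boxes `[0, 1]` and `[h, 1 + h]`
  have hcoord : ∀ i, |h i| ≤ 1 := fun i => (norm_le_pi_norm h i).trans hh
  have hz : 0 ⊔ h ∈ Icc 0 1 :=
    ⟨le_sup_left, sup_le zero_le_one fun i => (abs_le.1 (hcoord i)).2⟩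
  have hzh : 0 ⊔ h - h ∈ Icc 0 1 :=
    ⟨sub_nonneg.2 le_sup_right, sub_le_iff_le_add.2 (sup_le
      (fun _ => neg_le_iff_add_nonneg'.1 (abs_le.1 (hcoord _)).1) (by simp))⟩
  have hshifted : subcubePoint s y (0 ⊔ h) = subcubePoint s x (0 ⊔ h - h) := by
    rw [← hshift, sub_add_cancel]
  have hbound := norm_setIntegral_unitBox_add_sub_le (continuous_comp_subcubePoint hg s y) hh
    (c := g (subcubePoint s y (0 ⊔ h))) (W := W) ?_ ?_
  · simp only [hshift, Fintype.card_fin, hnorm, ← dist_eq_norm] at hbound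
    exact hbound.trans_eq (by ring)
  · intro u hu
    rw [← dist_eq_norm]
    exact hosc.dist_subcubePoint_le hs0.le hs1 hy hu hz
  · intro u hu
    rw [← dist_eq_norm, hshift, hshifted]
    exact hosc.dist_subcubePoint_le hs0.le hs1 hx hu hzh

theorem exists_smoothing_of_norm_fderiv_le {f : E d → X} (hf : ContDiff ℝ 1 f) {W D : ℝ}
    (hs0 : 0 < s) (hs1 : s ≤ 1) (hosc : OscLE (fderiv ℝ f) s W)
    (hD : ∀ x ∈ unitCube d, ‖fderiv ℝ f x‖ ≤ D) :
    ∃ F : E d → X, ContDiff ℝ 1 F ∧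
      (∀ x ∈ unitCube d, ‖F x - f x‖ ≤ D * (√d * s) ∧
        ‖fderiv ℝ F x - fderiv ℝ f x‖ ≤ W + s * D) ∧
      ∀ x ∈ unitCube d, ∀ y ∈ unitCube d, dist x.ofLp y.ofLp ≤ s →
        dist (fderiv ℝ F x) (fderiv ℝ F y) ≤
          2 * W * d * ((1 - s) / s) * dist x.ofLp y.ofLp := by
  have hf' : Continuous (fderiv ℝ f) := hf.continuous_fderiv one_ne_zero
  have hderiv : ∀ x, fderiv ℝ (cubeAverage s f) x = (1 - s) • cubeAverage s (fderiv ℝ f) x :=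
    fun x => (hasFDerivAt_cubeAverage hf s x).fderiv
  refine ⟨cubeAverage s f, contDiff_one_iff_fderiv.2
    ⟨fun x => (hasFDerivAt_cubeAverage hf s x).differentiableAt, ?_⟩,
    fun x hx => ⟨norm_cubeAverage_sub_self_le_of_norm_fderiv_le hs0.le hs1
      (hf.differentiable one_ne_zero) hD hx, ?_⟩, fun x hx y hy hxy => ?_⟩
  · rw [funext hderiv]
    exact (continuous_const_smul (1 - s)).comp (continuous_cubeAverage hf' s)
  · have hself := hosc.dist_cubeAverage_self_le hf' hs0.le hs1 hx
    have hbound := norm_cubeAverage_le hs0.le hs1 hf' hD hx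
    calc ‖fderiv ℝ (cubeAverage s f) x - fderiv ℝ f x‖
        = ‖(cubeAverage s (fderiv ℝ f) x - fderiv ℝ f x) - s • cubeAverage s (fderiv ℝ f) x‖ := by
          rw [hderiv, sub_smul, one_smul, sub_right_comm]
      _ ≤ ‖cubeAverage s (fderiv ℝ f) x - fderiv ℝ f x‖ + ‖s • cubeAverage s (fderiv ℝ f) x‖ :=
          norm_sub_le _ _
      _ ≤ W + s * D := by
          rw [← dist_eq_norm, norm_smul, Real.norm_of_nonneg hs0.le]
          gcongr
  · rw [hderiv, hderiv, dist_eq_norm, ← smul_sub, norm_smul,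
      Real.norm_of_nonneg (sub_nonneg.2 hs1), ← dist_eq_norm]
    exact (mul_le_of_le_one_left dist_nonneg (sub_le_self 1 hs0.le)).trans
      (hosc.dist_cubeAverage_le hf' hs0 hs1 hx hy hxy)

theorem mul_ceil_one_div_le_two {s : ℝ} (hs0 : 0 < s) (hs1 : s ≤ 1) : s * ⌈1 / s⌉₊ ≤ 2 :=
  calc s * ⌈1 / s⌉₊ ≤ s * (1 / s + 1) := by
        gcongr
        exact (Nat.ceil_lt_add_one (by positivity)).le
    _ = 1 + s := by field_simp
    _ ≤ 2 := by linarith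

/-- Subtracting the differential at `0` makes `Df` of size `W / s` on the cube, so that the factor
`1 - s` in the derivative of the average costs only `O(W)`. -/
theorem exists_smoothing {f : E d → X} (hf : ContDiff ℝ 1 f) {W : ℝ} (hs0 : 0 < s) (hs1 : s ≤ 1)
    (hosc : OscLE (fderiv ℝ f) s W) :
    ∃ F : E d → X, ContDiff ℝ 1 F ∧
      (∀ x ∈ unitCube d, ‖F x - f x‖ ≤ 2 * √d * W ∧ ‖fderiv ℝ F x - fderiv ℝ f x‖ ≤ 3 * W) ∧
      ∀ x ∈ unitCube d, ∀ y ∈ unitCube d, dist x.ofLp y.ofLp ≤ s →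
        dist (fderiv ℝ F x) (fderiv ℝ F y) ≤
          2 * W * d * ((1 - s) / s) * dist x.ofLp y.ofLp := by
  set B := fderiv ℝ f 0
  have hadd : ∀ {g : E d → X}, ContDiff ℝ 1 g → ∀ x, fderiv ℝ (g + ⇑B) x = fderiv ℝ g x + B :=
    fun hg x => ((hg.differentiable one_ne_zero x).hasFDerivAt.add B.hasFDerivAt).fderiv
  have hf₀ : ContDiff ℝ 1 (f - ⇑B) := hf.sub B.contDiff
  have hderiv₀ : ∀ x, fderiv ℝ (f - ⇑B) x = fderiv ℝ f x - B := fun x =>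
    ((hf.differentiable one_ne_zero x).hasFDerivAt.sub B.hasFDerivAt).fderiv
  have hceil : s * (⌈1 / s⌉₊ * W) ≤ 2 * W := by
    rw [← mul_assoc]
    exact mul_le_mul_of_nonneg_right (mul_ceil_one_div_le_two hs0 hs1) (hosc.nonneg hs0.le)
  obtain ⟨F, hF, hclose, hLip⟩ := exists_smoothing_of_norm_fderiv_le hf₀ hs0 hs1
    (W := W) (D := ⌈1 / s⌉₊ * W)
    (fun x hx y hy hxy => by rw [hderiv₀, hderiv₀, dist_sub_right]; exact hosc x hx y hy hxy)
    (fun x hx => by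
      rw [hderiv₀, ← dist_eq_norm]
      exact hosc.dist_le hs0 hx (zero_mem_unitCube d))
  refine ⟨F + ⇑B, hF.add B.contDiff, fun x hx => ⟨?_, ?_⟩, fun x hx y hy hxy => ?_⟩
  · calc ‖(F + ⇑B) x - f x‖ = ‖F x - (f - ⇑B) x‖ := by
          rw [Pi.add_apply, Pi.sub_apply, sub_sub_eq_add_sub]
      _ ≤ ⌈1 / s⌉₊ * W * (√d * s) := (hclose x hx).1
      _ = √d * (s * (⌈1 / s⌉₊ * W)) := by ring
      _ ≤ √d * (2 * W) := by gcongr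
      _ = 2 * √d * W := by ring
  · calc ‖fderiv ℝ (F + ⇑B) x - fderiv ℝ f x‖ = ‖fderiv ℝ F x - fderiv ℝ (f - ⇑B) x‖ := by
          rw [hadd hF, hderiv₀, sub_sub_eq_add_sub]
      _ ≤ W + s * (⌈1 / s⌉₊ * W) := (hclose x hx).2
      _ ≤ 3 * W := by linarith
  · rw [hadd hF, hadd hF, dist_add_right]
    exact hLip x hx y hy hxy

end Smoothing

section CriticalSets

variable {d m : ℕ} {f : E d → E m}

theorem Nf_le_of_oscLE (hm : 1 ≤ m) (hmd : m ≤ d) (hf : ContDiff ℝ 1 f) {s W r ε : ℝ}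
    (hs0 : 0 < s) (hs1 : s ≤ 1) (hosc : OscLE (fderiv ℝ f) s W) (hr : 0 < r)
    (hε : 3 * √d * W + r * d * √d ≤ ε) :
    Nf f ε ≤
      ENNReal.ofReal (2 * m ^ 2 * d * (2 * W * d * ((1 - s) / s)) * √d ^ (d - 1) / r) := by
  have hW : 0 ≤ W := hosc.nonneg hs0.le
  have hsqrt : 1 ≤ √(d : ℝ) := Real.one_le_sqrt.2 (Nat.one_le_cast.2 (hm.trans hmd))
  obtain ⟨F, hF, hclose, hLip⟩ := exists_smoothing hf hs0 hs1 hosc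
  have hL : 0 ≤ 2 * W * d * ((1 - s) / s) :=
    mul_nonneg (by positivity) (div_nonneg (sub_nonneg.2 hs1) hs0.le)
  obtain ⟨A, hA⟩ := exists_hausdorffMeasure_critSet_le hm hmd (hF.differentiable one_ne_zero)
    hr hs0 hL hLip
  set M := matrixCLM (scaledMatrix r A)
  have hM : ‖M‖ ≤ r * d :=
    calc ‖M‖ ≤ √m * (√d * r) := norm_matrixCLM_le hr.le (abs_scaledMatrix_apply_le hr.le A)
      _ ≤ √d * (√d * r) := by gcongr
      _ = r * d := by rw [← mul_assoc, Real.mul_self_sqrt d.cast_nonneg, mul_comm]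
  have hfderiv : ∀ x, fderiv ℝ (F + ⇑M) x = fderiv ℝ F x + M := fun x =>
    ((hF.differentiable one_ne_zero x).hasFDerivAt.add M.hasFDerivAt).fderiv
  refine le_trans (sInf_le ⟨F + ⇑M, hF.add M.contDiff, fun x hx => ⟨?_, ?_⟩, rfl⟩) hA
  · calc ‖(F + ⇑M) x - f x‖ = ‖(F x - f x) + M x‖ := by rw [Pi.add_apply, add_sub_right_comm]
      _ ≤ ‖F x - f x‖ + ‖M‖ * ‖x‖ := (norm_add_le _ _).trans (by gcongr; exact M.le_opNorm x)
      _ ≤ 2 * √d * W + r * d * √d := by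
          gcongr
          exacts [(hclose x hx).1, norm_le_sqrt_of_mem_unitCube hx]
      _ ≤ ε := hε.trans' (by gcongr; norm_num)
  · calc ‖fderiv ℝ (F + ⇑M) x - fderiv ℝ f x‖ = ‖(fderiv ℝ F x - fderiv ℝ f x) + M‖ := by
          rw [hfderiv, add_sub_right_comm]
      _ ≤ 3 * W + r * d := (norm_add_le _ _).trans (add_le_add (hclose x hx).2 hM)
      _ ≤ 3 * W * √d + r * d * √d := add_le_add
          (le_mul_of_one_le_right (by positivity) hsqrt)
          (le_mul_of_one_le_right (by positivity) hsqrt)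
      _ ≤ ε := by rwa [mul_right_comm 3 W]

theorem oscLE_omegaC1 (hf : ContDiff ℝ 1 f) {s δ : ℝ} (hsδ : s ≤ δ) :
    OscLE (fderiv ℝ f) s (omegaC1 f (unitCube d) (√d * δ)) := by
  intro x hx y hy hxy
  obtain ⟨C, hC⟩ := (isCompact_unitCube d).exists_bound_of_continuousOn
    (hf.continuous_fderiv one_ne_zero).continuousOn
  refine le_csSup ⟨C + C, ?_⟩ ⟨x, hx, y, hy, ?_, dist_eq_norm _ _⟩
  · rintro _ ⟨a, ha, b, hb, -, rfl⟩
    exact (norm_sub_le _ _).trans (add_le_add (hC a ha) (hC b hb))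
  · rw [← dist_eq_norm]
    exact (dist_le_sqrt_mul_dist_ofLp x y).trans (by gcongr; exact hxy.trans hsδ)

theorem betaf_eq (hd : 1 ≤ d) (f : E d → E m) (δ : ℝ) :
    betaf f δ = omegaC1 f (unitCube d) (√d * δ) *
      (1 + √d * δ + 4 * (d ^ d * √d * (d + 1) ^ 4)) := by
  rw [betaf, Real.rpow_add (by positivity), Real.rpow_natCast, ← Real.sqrt_eq_rpow]
  ring

theorem one_sub_min_div_min_le {δ : ℝ} (hδ : 0 < δ) : (1 - min δ 1) / min δ 1 ≤ 1 / δ := by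
  rcases le_total δ 1 with h | h
  · rw [min_eq_left h]
    gcongr
    linarith
  · rw [min_eq_right h, sub_self, zero_div]
    positivity

/-- The size of the random perturbation, relative to the oscillation of the derivative. The
subtracted `3` makes room for the smoothing error. -/
def perturbationSize (d : ℕ) : ℝ :=
  d ^ (d - 1) * (4 * ((d : ℝ) + 1) ^ 4 - 3)

theorem add_perturbationSize_mul_le (hd : 1 ≤ d) :
    3 * √d + perturbationSize d * d * √d ≤ 4 * (d ^ d * √d * (d + 1) ^ 4) := by
  have hpow : (d : ℝ) ^ d = d ^ (d - 1) * d := by rw [← pow_succ, Nat.sub_add_cancel hd]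
  have hone : √d ≤ d ^ d * √d :=
    le_mul_of_one_le_left (Real.sqrt_nonneg _) (one_le_pow₀ (Nat.one_le_cast.2 hd))
  calc 3 * √d + perturbationSize d * d * √d
      = 4 * (d ^ d * √d * (d + 1) ^ 4) - 3 * (d ^ d * √d - √d) := by
        rw [perturbationSize, hpow]
        ring
    _ ≤ 4 * (d ^ d * √d * (d + 1) ^ 4) := by linarith

theorem sq_mul_sq_mul_sqrt_pow_le_perturbationSize (hmd : m ≤ d) (hd : 1 ≤ d) :
    4 * ((m : ℝ) ^ 2 * d ^ 2 * √d ^ (d - 1)) ≤ perturbationSize d := by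
  have hd' : (1 : ℝ) ≤ d := Nat.one_le_cast.2 hd
  have hsqrt : √(d : ℝ) ≤ d := (Real.sqrt_le_left (by positivity)).2 (le_self_pow₀ hd' two_ne_zero)
  calc 4 * ((m : ℝ) ^ 2 * d ^ 2 * √d ^ (d - 1)) ≤ 4 * (d ^ 2 * d ^ 2 * d ^ (d - 1)) := by gcongr
    _ = d ^ (d - 1) * (4 * (d : ℝ) ^ 4) := by ring
    _ ≤ perturbationSize d := by
        rw [perturbationSize]
        gcongr
        nlinarith [pow_le_pow_left₀ zero_le_one hd' 3]

theorem perturbationSize_pos (hd : 1 ≤ d) : 0 < perturbationSize d :=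
  (by positivity : (0:ℝ) < _).trans_le (sq_mul_sq_mul_sqrt_pow_le_perturbationSize le_rfl hd)

theorem one_le_dim_mul_two_pow_mul_factorial (hd : 1 ≤ d) (k : ℕ) :
    (1 : ℝ) ≤ d * 2 ^ k * d.factorial := by
  exact_mod_cast Nat.one_le_iff_ne_zero.2 (by positivity)

theorem statement2_general (d m : ℕ) (hm : 1 ≤ m) (hmd : m ≤ d)
    (f : E d → E m) (hf : ContDiff ℝ 1 f) (δ : ℝ) (hδ : 0 < δ) (hβ : 0 < betaf f δ) :
    Nf f (betaf f δ) ≤ ENNReal.ofReal (1 / δ) := by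
  have hd : 1 ≤ d := hm.trans hmd
  set W := omegaC1 f (unitCube d) (√d * δ)
  set K := perturbationSize d
  rw [betaf_eq hd] at hβ ⊢
  have hW : 0 < W := pos_of_mul_pos_left hβ (by positivity)
  have hK : 0 < K := perturbationSize_pos hd
  have hε : 3 * √d * W + W * K * d * √d ≤
      W * (1 + √d * δ + 4 * (d ^ d * √d * (d + 1) ^ 4)) :=
    calc 3 * √d * W + W * K * d * √d = W * (3 * √d + K * d * √d) := by ring
      _ ≤ W * (4 * (d ^ d * √d * (d + 1) ^ 4)) := by
          gcongr
          exact add_perturbationSize_mul_le hd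
      _ ≤ W * (1 + √d * δ + 4 * (d ^ d * √d * (d + 1) ^ 4)) := by
          gcongr
          exact le_add_of_nonneg_left (by positivity)
  refine (Nf_le_of_oscLE hm hmd hf (lt_min hδ one_pos) (min_le_right δ 1)
    (oscLE_omegaC1 hf (min_le_left δ 1)) (mul_pos hW hK) hε).trans (ENNReal.ofReal_le_ofReal ?_)
  rw [div_le_iff₀ (mul_pos hW hK)]
  calc 2 * m ^ 2 * d * (2 * W * d * ((1 - min δ 1) / min δ 1)) * √d ^ (d - 1)
      = (1 - min δ 1) / min δ 1 * (W * (4 * (m ^ 2 * d ^ 2 * √d ^ (d - 1)))) := by ring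
    _ ≤ 1 / δ * (W * K) := mul_le_mul (one_sub_min_div_min_le hδ)
        (mul_le_mul_of_nonneg_left (sq_mul_sq_mul_sqrt_pow_le_perturbationSize hmd hd) hW.le)
        (by positivity) (by positivity)

end CriticalSets

/-- upper bound on `N_f(ε)` in terms of the inverse of `β_f`.
Since `β_f` is strictly increasing, `β_f⁻¹(ε) = δ` exactly when `β_f(δ) = ε`. -/
theorem statement2 (d m : ℕ) (hm : 1 ≤ m) (hmd : m ≤ d)
    (f : E d → E m) (hf : ContDiff ℝ 1 f)
    (hnc : ¬ ∀ x ∈ unitCube d, ∀ y ∈ unitCube d, f x = f y)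
    (ε : ℝ) (hε : 0 < ε) (δ : ℝ) (hδ : 0 < δ) (hβ : betaf f δ = ε) :
    Nf f ε ≤ ENNReal.ofReal ((d : ℝ) * 2 ^ (2*m + d - 1) * (d.factorial : ℝ) * (1 / δ)) := by
  subst hβ
  exact (statement2_general d m hm hmd f hf δ hδ hε).trans (ENNReal.ofReal_le_ofReal
    (le_mul_of_one_le_left (by positivity)
      (one_le_dim_mul_two_pow_mul_factorial (hm.trans hmd) _)))
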